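/- Let b ≥ 1 and let Z ⊆ ℝ^m × ℝ^n be a semi-algebraic set defined by a Boolean formula in polynomials f_1,…,f_b ∈ ℝ[x_1,…,x_m,y_1,…,y_n], each of degree at most b. For each y ∈ ℝ^n define R_y = {x ∈ ℝ^m : (x,y) ∈ Z}. Then for every positive integer z and every choice of points p_1,…,p_z ∈ ℝ^m, the number of distinct sets of the form R_y ∩ {p_1,…,p_z}, over all y ∈ ℝ^n, is at most (50·b²·z)^n. -/

import Mathlib

open MvPolynomial

/-!
Fix finitely many parameters realizing all the sign patterns of the polynomials `f_i(p_j, ·)`.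
Adding a small constant `δ` to each polynomial turns `≥ 0` into `> 0` at these parameters and makes
the product `P` of the perturbed polynomials nonzero there, and sign vectors are locally constant
where `P ≠ 0`. For small `ε > 0` the polynomial `P ^ 2 - ε ∑ y_i ^ (d + 1)`, with `d = 2 deg P + 1`,
is positive at the chosen parameters but nonpositive near infinity and wherever `P = 0`. So each
sign vector in question is also attained at a local maximum of this polynomial. Its critical points
solve a system `y_i ^ d = q_i(y)` with `deg q_i < d`, whose quotient algebra is spanned by the
`d ^ n` monomials with all exponents below `d` (divide by the `y_i ^ d - q_i`). Distinct solutions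
being distinct characters of that algebra, there are at most `d ^ n` of them.
-/

open MonomialOrder Filter Asymptotics Bornology Topology

section ZeroLocus

variable {σ k : Type*} (K : Type*) [Field k] [Field K] [Algebra k K]

theorem encard_zeroLocus_le_finrank
    (I : Ideal (MvPolynomial σ k)) [Module.Finite k (MvPolynomial σ k ⧸ I)] :
    (zeroLocus K I).encard ≤ Module.finrank k (MvPolynomial σ k ⧸ I) := by
  let evalAt (x : zeroLocus K I) : (MvPolynomial σ k ⧸ I) →ₐ[k] K :=
    Ideal.Quotient.liftₐ I (aeval x.1) x.2
  have evalAt_injective : Function.Injective evalAt := fun x y h => by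
    have evalAt_mk (w : zeroLocus K I) (p) : evalAt w (Ideal.Quotient.mk I p) = aeval w.1 p := rfl
    ext i
    simpa only [evalAt_mk, aeval_X] using congr($h (Ideal.Quotient.mk I (X i)))
  have := Finite.of_injective evalAt evalAt_injective
  rw [← (Set.toFinite (zeroLocus K I)).cast_ncard_eq, Nat.cast_le]
  exact (Nat.card_le_card_of_injective evalAt evalAt_injective).trans
    (card_algHom_le_finrank k (MvPolynomial σ k ⧸ I) K)

end ZeroLocus

section PowSystem

variable {σ : Type*} {d : ℕ}

section Semiring

variable {R : Type*} [CommSemiring R] [Nontrivial R]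

theorem monomialOrder_degree_X_pow (m : MonomialOrder σ) (i : σ) :
    m.degree (X i ^ d : MvPolynomial σ R) = Finsupp.single i d := by
  classical rw [X_pow_eq_monomial, m.degree_monomial, if_neg one_ne_zero]

theorem degLex_degree_lt_degree_X_pow [LinearOrder σ] [WellFoundedGT σ] {p : MvPolynomial σ R}
    (hp : p.totalDegree < d) (i : σ) :
    degLex.degree p ≺[degLex] degLex.degree (X i ^ d : MvPolynomial σ R) := by
  rw [degLex_lt_iff, Finsupp.DegLex.lt_iff, monomialOrder_degree_X_pow]
  left
  simpa [degree_degLexDegree] using hp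

end Semiring

section Ring

variable {R : Type*} [CommRing R] [Nontrivial R] {q : σ → MvPolynomial σ R}

theorem exists_sub_mem_span_X_pow_sub [Finite σ] (hq : ∀ i, (q i).totalDegree < d)
    (p : MvPolynomial σ R) :
    ∃ r : MvPolynomial σ R, p - r ∈ Ideal.span (Set.range fun i => X i ^ d - q i) ∧
      ∀ u ∈ r.support, ∀ i, u i < d := by
  let := Fintype.ofFinite σ
  let : LinearOrder σ := LinearOrder.lift' (Fintype.equivFin σ) (Fintype.equivFin σ).injective
  have degree_lt i := degLex_degree_lt_degree_X_pow (hq i) i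
  have degree_eq i : degLex.degree (X i ^ d - q i) = Finsupp.single i d := by
    rw [degree_sub_of_lt (degree_lt i), monomialOrder_degree_X_pow]
  have leadingCoeff_eq_one i : degLex.leadingCoeff (X i ^ d - q i) = 1 :=
    (leadingCoeff_sub_of_lt (degree_lt i)).trans monic_X.pow
  obtain ⟨g, r, hp, -, hr⟩ := degLex.div (b := fun i => X i ^ d - q i)
    (fun i => by simp [leadingCoeff_eq_one]) p
  refine ⟨r, ?_, fun u hu i => ?_⟩
  · rw [hp, add_sub_cancel_right]
    exact Finsupp.mem_span_range_iff_exists_finsupp.2 ⟨g, rfl⟩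
  · simpa [degree_eq] using hr u hu i

theorem span_range_mk_prod_X_pow_eq_top [Fintype σ] (hq : ∀ i, (q i).totalDegree < d) :
    Submodule.span R (Set.range fun e : σ → Fin d =>
      Ideal.Quotient.mk (Ideal.span (Set.range fun i => X i ^ d - q i))
        (∏ i, X i ^ (e i : ℕ))) = ⊤ := by
  rw [eq_top_iff]
  rintro a -
  obtain ⟨p, rfl⟩ := Ideal.Quotient.mk_surjective a
  obtain ⟨r, hpr, hr⟩ := exists_sub_mem_span_X_pow_sub hq p
  rw [Ideal.Quotient.mk_eq_mk_iff_sub_mem _ _ |>.2 hpr, r.as_sum, map_sum]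
  refine Submodule.sum_mem _ fun u hu => ?_
  have mk_monomial : Ideal.Quotient.mk (Ideal.span (Set.range fun i => X i ^ d - q i))
      (monomial u (coeff u r)) = coeff u r • Ideal.Quotient.mk _ (∏ i, X i ^ u i) := by
    rw [monomial_eq, ← smul_eq_C_mul, Finsupp.prod_fintype _ _ fun _ => pow_zero _]
    rfl
  rw [mk_monomial]
  exact Submodule.smul_mem _ _ (Submodule.subset_span ⟨fun i => ⟨u i, hr u hu i⟩, rfl⟩)

end Ring

theorem encard_setOf_pow_eq_eval_le {K : Type*} [Field K] [Fintype σ] {q : σ → MvPolynomial σ K}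
    (hq : ∀ i, (q i).totalDegree < d) :
    {x : σ → K | ∀ i, x i ^ d = eval x (q i)}.encard ≤ d ^ Fintype.card σ := by
  classical
  let I := Ideal.span (Set.range fun i => X i ^ d - q i)
  have zeros_eq : {x : σ → K | ∀ i, x i ^ d = eval x (q i)} = zeroLocus K I := by
    ext x
    simp [I, zeroLocus_span, sub_eq_zero]
  have span_eq_top := span_range_mk_prod_X_pow_eq_top hq
  have : Module.Finite K (MvPolynomial σ K ⧸ I) :=
    Module.finite_def.2 (span_eq_top ▸ Submodule.fg_span (Set.finite_range _))
  rw [zeros_eq]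
  refine (encard_zeroLocus_le_finrank K I).trans ?_
  exact_mod_cast (finrank_le_of_span_eq_top span_eq_top).trans_eq (by simp)

end PowSystem

section Derivative

theorem totalDegree_pderiv_le {σ R : Type*} [CommSemiring R] (i : σ) (p : MvPolynomial σ R) :
    (pderiv i p).totalDegree ≤ p.totalDegree - 1 := by
  refine Finset.sup_le fun u hu => ?_
  rw [mem_support_iff, coeff_pderiv] at hu
  have degree_le : (u + Finsupp.single i 1).degree ≤ p.totalDegree :=
    le_totalDegree (mem_support_iff.2 (left_ne_zero_of_mul hu))
  rw [map_add, Finsupp.degree_single] at degree_le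
  exact Nat.le_sub_of_add_le degree_le

theorem pderiv_psum {σ R : Type*} [CommSemiring R] [Fintype σ] (i : σ) (m : ℕ) :
    pderiv i (psum σ R m) = (m : MvPolynomial σ R) * X i ^ (m - 1) := by
  rw [psum, map_sum, Finset.sum_eq_single_of_mem i (Finset.mem_univ i), pderiv_pow,
    pderiv_X_self, mul_one]
  intro j _ hj
  rw [pderiv_pow, pderiv_X_of_ne hj, mul_zero]

theorem encard_setOf_pderiv_sub_psum_eq_zero_le {σ K : Type*} [Fintype σ] [Field K] [CharZero K]
    {p : MvPolynomial σ K} {d : ℕ} (hp : p.totalDegree < d) {ε : K} (hε : ε ≠ 0) :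
    {x | ∀ i, eval x (pderiv i (p - C ε * psum σ K (d + 1))) = 0}.encard ≤
      d ^ Fintype.card σ := by
  let q i := C (ε * (d + 1))⁻¹ * pderiv i p
  have totalDegree_lt i : (q i).totalDegree < d :=
    calc (q i).totalDegree ≤ (pderiv i p).totalDegree := by
          simpa only [q, totalDegree_C, zero_add] using totalDegree_mul (C _) (pderiv i p)
      _ ≤ p.totalDegree := (totalDegree_pderiv_le i p).trans (Nat.sub_le _ _)
      _ < d := hp
  refine (Set.encard_le_encard fun x hx i => ?_).trans
    (encard_setOf_pow_eq_eval_le totalDegree_lt)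
  have hxi : eval x (pderiv i p) - ε * ((d + 1) * x i ^ d) = 0 := by
    simpa [pderiv_psum, pderiv_C_mul] using hx i
  have : (d + 1 : K) ≠ 0 := Nat.cast_add_one_ne_zero d
  simp only [q, map_mul, eval_C, sub_eq_zero.1 hxi]
  field_simp

theorem hasDerivAt_eval_update {σ 𝕜 : Type*} [DecidableEq σ] [NontriviallyNormedField 𝕜] (i : σ)
    (x : σ → 𝕜) (p : MvPolynomial σ 𝕜) (t : 𝕜) :
    HasDerivAt (fun s => eval (Function.update x i s) p)
      (eval (Function.update x i t) (pderiv i p)) t := by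
  induction p using MvPolynomial.induction_on with
  | C a => simpa using hasDerivAt_const t a
  | add p q hp hq => simp only [map_add]; exact hp.add hq
  | mul_X p j hp =>
    have hasDerivAt_X : HasDerivAt (fun s => Function.update x i s j)
        (eval (Function.update x i t) (pderiv i (X j))) t := by
      obtain rfl | hji := eq_or_ne j i
      · simpa using hasDerivAt_id' t
      · simpa [hji, pderiv_X_of_ne hji] using hasDerivAt_const t (x j)
    simp only [map_mul, eval_X, pderiv_mul, map_add]
    exact hp.mul hasDerivAt_X

theorem eval_pderiv_eq_zero_of_isLocalMax {σ : Type*} {p : MvPolynomial σ ℝ} {c : σ → ℝ}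
    (hc : IsLocalMax (fun x => eval x p) c) (i : σ) : eval c (pderiv i p) = 0 := by
  classical
  have deriv_at := hasDerivAt_eval_update i c p (c i)
  rw [Function.update_eq_self] at deriv_at
  refine IsLocalMax.hasDerivAt_eq_zero ?_ deriv_at
  have continuous_update : Continuous (Function.update c i) := by fun_prop
  exact IsLocalMax.comp_continuous (f := fun x => eval x p) (by simpa using hc)
    continuous_update.continuousAt

end Derivative

section Growth

theorem isBigO_eval_norm_pow_totalDegree {σ 𝕜 : Type*} [Fintype σ] [NormedField 𝕜]
    (p : MvPolynomial σ 𝕜) :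
    (fun x => eval x p) =O[cobounded (σ → 𝕜)] fun x => ‖x‖ ^ p.totalDegree := by
  simp only [eval_eq]
  refine IsBigO.fun_sum fun u hu => IsBigO.const_mul_left (.of_norm_eventuallyLE ?_) _
  filter_upwards [tendsto_norm_cobounded_atTop.eventually_ge_atTop 1] with x hx
  calc ‖∏ i ∈ u.support, x i ^ u i‖ = ∏ i ∈ u.support, ‖x i‖ ^ u i := by simp
    _ ≤ ∏ i ∈ u.support, ‖x‖ ^ u i := by gcongr with i; exact norm_le_pi_norm x i
    _ = ‖x‖ ^ u.degree := Finset.prod_pow_eq_pow_sum _ _ _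
    _ ≤ ‖x‖ ^ p.totalDegree := pow_le_pow_right₀ hx (le_totalDegree hu)

theorem eval_psum_nonneg {σ : Type*} [Fintype σ] {m : ℕ} (hm : Even m) (x : σ → ℝ) :
    0 ≤ eval x (psum σ ℝ m) := by
  simpa [psum] using Finset.sum_nonneg fun i _ => hm.pow_nonneg (x i)

theorem norm_pow_le_eval_psum {σ : Type*} [Fintype σ] {m : ℕ} (hm : Even m) (hm₀ : m ≠ 0)
    (x : σ → ℝ) : ‖x‖ ^ m ≤ eval x (psum σ ℝ m) := by
  rcases isEmpty_or_nonempty σ with _ | _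
  · simp [Subsingleton.elim x 0, hm₀, psum]
  obtain ⟨i, hi⟩ := Finite.exists_max fun i => ‖x i‖
  calc ‖x‖ ^ m ≤ ‖x i‖ ^ m := by gcongr; exact (pi_norm_le_iff_of_nonempty x).2 hi
    _ = x i ^ m := hm.pow_abs (x i)
    _ ≤ ∑ j, x j ^ m :=
      Finset.single_le_sum (fun j _ => hm.pow_nonneg (x j)) (Finset.mem_univ i)
    _ = eval x (psum σ ℝ m) := by simp [psum]

theorem eventually_eval_sub_psum_nonpos {σ : Type*} [Fintype σ] {p : MvPolynomial σ ℝ} {m : ℕ}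
    (hp : p.totalDegree < m) (hm : Even m) {ε : ℝ} (hε : 0 < ε) :
    ∀ᶠ x in cocompact (σ → ℝ), eval x (p - C ε * psum σ ℝ m) ≤ 0 := by
  have eval_isLittleO : (fun x => eval x p) =o[cobounded (σ → ℝ)] fun x => ‖x‖ ^ m :=
    (isBigO_eval_norm_pow_totalDegree p).trans_isLittleO
      ((isLittleO_pow_pow_atTop_of_lt hp).comp_tendsto tendsto_norm_cobounded_atTop)
  rw [← Metric.cobounded_eq_cocompact]
  filter_upwards [eval_isLittleO.bound hε] with x hx
  have norm_pow_le := norm_pow_le_eval_psum hm (Nat.ne_zero_of_lt hp) x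
  simp only [map_sub, map_mul, eval_C, sub_nonpos]
  calc eval x p ≤ ‖eval x p‖ := Real.le_norm_self _
    _ ≤ ε * ‖x‖ ^ m := by simpa using hx
    _ ≤ ε * eval x (psum σ ℝ m) := by gcongr

end Growth

section CountLevels

theorem exists_isLocalMax_of_eventually_const {X β : Type*} [TopologicalSpace X] {g : X → ℝ}
    (hg : Continuous g) (hg_cocompact : ∀ᶠ x in cocompact X, g x ≤ 0) {f : X → β}
    (hf : ∀ x, 0 < g x → ∀ᶠ x' in 𝓝 x, f x' = f x) {y : X} (hy : 0 < g y) :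
    ∃ c, IsLocalMax g c ∧ f c = f y := by
  let S := {x | g y ≤ g x ∧ f x = f y}
  -- A limit point of `S` has `g ≥ g y > 0`, so `f` is constant near it.
  have isClosed_S : IsClosed S := by
    rw [← isOpen_compl_iff, isOpen_iff_mem_nhds]
    intro x hx
    by_cases hxy : g y ≤ g x
    · filter_upwards [hf x (hy.trans_le hxy)] with x' hx' hmem
      exact hx ⟨hxy, hx'.symm.trans hmem.2⟩
    · filter_upwards [hg.continuousAt.eventually_lt_const (not_le.1 hxy)] with x' hx' hmem
      exact hx'.not_ge hmem.1
  obtain ⟨c, hcS, hc⟩ := hg.continuousOn.exists_isMaxOn' isClosed_S (x₀ := y) ⟨le_rfl, rfl⟩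
    (mem_inf_of_left (hg_cocompact.mono fun x hx => hx.trans hy.le))
  refine ⟨c, ?_, hcS.2⟩
  filter_upwards [hf c (hy.trans_le hcS.1)] with x hx
  rcases le_total (g y) (g x) with hyx | hxy
  · exact hc ⟨hyx, hx.trans hcS.2⟩
  · exact hxy.trans hcS.1

theorem ncard_le_of_injOn_of_eventually_const {σ β : Type*} [Fintype σ] {P : MvPolynomial σ ℝ}
    {f : (σ → ℝ) → β} (hf : ∀ x, eval x P ≠ 0 → ∀ᶠ x' in 𝓝 x, f x' = f x)
    {T : Set (σ → ℝ)} (hT : T.Finite) (hPT : ∀ x ∈ T, eval x P ≠ 0) (hfT : T.InjOn f) :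
    T.ncard ≤ (2 * P.totalDegree + 1) ^ Fintype.card σ := by
  let d := 2 * P.totalDegree + 1
  have totalDegree_lt : (P ^ 2).totalDegree < d := Nat.lt_succ_of_le (totalDegree_pow P 2)
  have even_succ_d : Even (d + 1) := ⟨P.totalDegree + 1, by ring⟩
  let g (ε : ℝ) := P ^ 2 - C ε * psum σ ℝ (d + 1)
  have eval_g ε x : eval x (g ε) = eval x P ^ 2 - ε * eval x (psum σ ℝ (d + 1)) := by simp [g]
  have eventually_pos : ∀ᶠ ε in 𝓝[>] (0 : ℝ), ∀ x ∈ T, 0 < eval x (g ε) := by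
    refine (hT.eventually_all).2 fun x hx => nhdsWithin_le_nhds ?_
    have : ContinuousAt (fun ε => eval x (g ε)) 0 := by simp only [eval_g]; fun_prop
    exact this.eventually_const_lt (by simpa [eval_g] using sq_pos_of_ne_zero (hPT x hx))
  obtain ⟨ε, g_pos, hε⟩ := (eventually_pos.and self_mem_nhdsWithin).exists
  have f_const x (hx : 0 < eval x (g ε)) : ∀ᶠ x' in 𝓝 x, f x' = f x := by
    refine hf x fun hP => hx.not_ge ?_
    simpa [eval_g, hP] using mul_nonneg hε.le (eval_psum_nonneg even_succ_d x)
  have image_subset : f '' T ⊆ f '' {x | ∀ i, eval x (pderiv i (g ε)) = 0} := by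
    rintro _ ⟨y, hyT, rfl⟩
    obtain ⟨c, hc, hcy⟩ := exists_isLocalMax_of_eventually_const (continuous_eval (g ε))
      (eventually_eval_sub_psum_nonpos (totalDegree_lt.trans d.lt_succ_self) even_succ_d hε)
      f_const (g_pos y hyT)
    exact ⟨c, eval_pderiv_eq_zero_of_isLocalMax hc, hcy⟩
  have encard_le := calc
    T.encard = (f '' T).encard := hfT.encard_image.symm
    _ ≤ {x | ∀ i, eval x (pderiv i (g ε)) = 0}.encard :=
      (Set.encard_le_encard image_subset).trans (Set.encard_image_le f _)
    _ ≤ d ^ Fintype.card σ :=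
      encard_setOf_pderiv_sub_psum_eq_zero_le totalDegree_lt (ne_of_gt hε)
  rw [← hT.cast_ncard_eq] at encard_le
  exact_mod_cast encard_le

end CountLevels

section SignPatterns

variable {σ ι : Type*}

/-- The sign vector at `x` of the family `q`, with `0` allowed as a sign. It labels the cells into
which the zero sets of the `q i` cut the space. -/
noncomputable def signVector (q : ι → MvPolynomial σ ℝ) (x : σ → ℝ) (i : ι) : SignType :=
  SignType.sign (eval x (q i))

theorem eventually_signVector_eq [Finite ι] {q : ι → MvPolynomial σ ℝ} {x : σ → ℝ}
    (hx : ∀ i, eval x (q i) ≠ 0) : ∀ᶠ x' in 𝓝 x, signVector q x' = signVector q x := by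
  have continuousAt_signVector : ContinuousAt (signVector q) x := continuousAt_pi.2 fun i =>
    (continuousAt_sign_of_ne_zero (hx i)).comp (f := fun x => eval x (q i))
      (continuous_eval (q i)).continuousAt
  simpa only [nhds_discrete, tendsto_pure] using continuousAt_signVector.tendsto

theorem pos_iff_of_signVector_eq {q : ι → MvPolynomial σ ℝ} {x y : σ → ℝ}
    (h : signVector q x = signVector q y) (i : ι) : 0 < eval x (q i) ↔ 0 < eval y (q i) := by
  rw [← sign_eq_one_iff, ← sign_eq_one_iff]
  exact congr($h i = 1).to_iff

theorem eventually_nonneg_iff_pos_add (a : ℝ) :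
    ∀ᶠ δ in 𝓝[>] (0 : ℝ), a + δ ≠ 0 ∧ (0 ≤ a ↔ 0 < a + δ) := by
  rcases le_or_gt 0 a with ha | ha
  · filter_upwards [self_mem_nhdsWithin] with δ (hδ : 0 < δ)
    exact ⟨by positivity, iff_of_true ha (by positivity)⟩
  · filter_upwards [nhdsWithin_le_nhds (eventually_lt_nhds (neg_pos.2 ha))] with δ hδ
    exact ⟨by linarith, iff_of_false ha.not_ge (by linarith)⟩

theorem ncard_range_nonneg_le [Fintype σ] [Fintype ι] (q : ι → MvPolynomial σ ℝ) :
    (Set.range fun (x : σ → ℝ) i => 0 ≤ eval x (q i)).ncard ≤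
      (2 * ∑ i, (q i).totalDegree + 1) ^ Fintype.card σ := by
  let pattern (x : σ → ℝ) (i : ι) : Prop := 0 ≤ eval x (q i)
  obtain ⟨T, image_T, pattern_injOn⟩ := Set.exists_image_eq_and_injOn Set.univ pattern
  have hT : T.Finite := .of_finite_image (Set.toFinite _) pattern_injOn
  obtain ⟨δ, hδ⟩ : ∃ δ, ∀ x ∈ T, ∀ i,
      eval x (q i) + δ ≠ 0 ∧ (0 ≤ eval x (q i) ↔ 0 < eval x (q i) + δ) :=
    (hT.eventually_all.2 fun x _ => eventually_all.2 fun i =>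
      eventually_nonneg_iff_pos_add (eval x (q i))).exists
  let q' i := q i + C δ
  have eval_prod_ne_zero x : eval x (∏ i, q' i) ≠ 0 ↔ ∀ i, eval x (q' i) ≠ 0 := by
    simp [Finset.prod_eq_zero_iff]
  have signVector_injOn : T.InjOn (signVector q') := fun x hx y hy hxy =>
    pattern_injOn hx hy <| funext fun i => propext <| by
      simpa [pattern, q', (hδ x hx i).2, (hδ y hy i).2] using pos_iff_of_signVector_eq hxy i
  calc (Set.range pattern).ncard = T.ncard := by
        rw [← Set.image_univ, ← image_T, pattern_injOn.ncard_image]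
    _ ≤ (2 * (∏ i, q' i).totalDegree + 1) ^ Fintype.card σ :=
      ncard_le_of_injOn_of_eventually_const
        (fun x hx => eventually_signVector_eq ((eval_prod_ne_zero x).1 hx)) hT
        (fun x hx => (eval_prod_ne_zero x).2 fun i => by simpa [q'] using (hδ x hx i).1)
        signVector_injOn
    _ ≤ (2 * ∑ i, (q i).totalDegree + 1) ^ Fintype.card σ := by
      gcongr
      refine (totalDegree_finsetProd _ _).trans (Finset.sum_le_sum fun i _ => ?_)
      simpa [q'] using totalDegree_add (q i) (C δ)

end SignPatterns

section Traces

theorem ncard_setOf_trace_le {X τ ι κ : Type*} [Fintype τ] [Fintype ι] [Fintype κ]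
    (F : ι → X → MvPolynomial τ ℝ) (φ : (ι → Prop) → Prop) (p : κ → X) :
    {A : Set X | ∃ y : τ → ℝ,
        A = {x | φ fun i => 0 ≤ eval y (F i x)} ∩ Set.range p}.ncard ≤
      (2 * ∑ i, ∑ j, (F i (p j)).totalDegree + 1) ^ Fintype.card τ := by
  let q (x : ι × κ) := F x.1 (p x.2)
  let trace (s : ι × κ → Prop) : Set X := p '' {j | φ fun i => s (i, j)}
  have traces_eq : {A : Set X | ∃ y : τ → ℝ,
      A = {x | φ fun i => 0 ≤ eval y (F i x)} ∩ Set.range p} =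
      trace '' Set.range fun (y : τ → ℝ) x => 0 ≤ eval y (q x) := by
    ext A
    simp [trace, q, ← Set.image_preimage_eq_inter_range, Set.preimage_ofPred_eq, eq_comm]
  calc _ ≤ (Set.range fun (y : τ → ℝ) x => 0 ≤ eval y (q x)).ncard :=
        traces_eq ▸ Set.ncard_image_le (Set.toFinite _)
    _ ≤ (2 * ∑ x, (q x).totalDegree + 1) ^ Fintype.card τ := ncard_range_nonneg_le q
    _ = _ := by rw [Fintype.sum_prod_type]

end Traces

section Specialization

theorem totalDegree_aeval_le {σ τ R : Type*} [CommSemiring R] {g : σ → MvPolynomial τ R} {d : ℕ}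
    (hg : ∀ i, (g i).totalDegree ≤ d) (p : MvPolynomial σ R) :
    (aeval g p).totalDegree ≤ p.totalDegree * d := by
  rw [aeval_def, eval₂_eq]
  refine totalDegree_finsetSum_le fun u hu => ?_
  calc (C (coeff u p) * ∏ i ∈ u.support, g i ^ u i).totalDegree
      ≤ (∏ i ∈ u.support, g i ^ u i).totalDegree := by
        simpa only [totalDegree_C, zero_add] using totalDegree_mul (C (coeff u p)) _
    _ ≤ ∑ i ∈ u.support, (g i ^ u i).totalDegree := totalDegree_finsetProd _ _
    _ ≤ ∑ i ∈ u.support, u i * d := by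
        gcongr with i
        exact (totalDegree_pow _ _).trans (Nat.mul_le_mul_left _ (hg i))
    _ = u.degree * d := (Finset.sum_mul _ _ _).symm
    _ ≤ p.totalDegree * d := Nat.mul_le_mul_right _ (le_totalDegree hu)

variable {σ τ R : Type*} [CommSemiring R]

/-- The specialization `f(x, ·)` of the first group of variables, as a polynomial in the second
group. The two groups are the summands of the index type. -/
noncomputable def specializeLeft (f : MvPolynomial (σ ⊕ τ) R) (x : σ → R) : MvPolynomial τ R :=
  aeval (Sum.elim (C ∘ x) X) f

theorem eval_specializeLeft (f : MvPolynomial (σ ⊕ τ) R) (x : σ → R) (y : τ → R) :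
    eval y (specializeLeft f x) = eval (Sum.elim x y) f := by
  induction f using MvPolynomial.induction_on with
  | C a => simp [specializeLeft]
  | add f g hf hg => simpa [specializeLeft] using congr($hf + $hg)
  | mul_X f i hf => cases i <;> simpa [specializeLeft] using congr($hf * _)

theorem totalDegree_specializeLeft_le (f : MvPolynomial (σ ⊕ τ) R) (x : σ → R) :
    (specializeLeft f x).totalDegree ≤ f.totalDegree := by
  refine (totalDegree_aeval_le (d := 1) (fun i => ?_) f).trans_eq (mul_one _)
  cases i with
  | inl i => simp
  | inr j => exact (totalDegree_monomial_le _ _).trans_eq (by simp)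

end Specialization

theorem sumElim_comp_finSumFinEquiv_symm {m n : ℕ} {α : Type*} (x : Fin m → α) (y : Fin n → α) :
    Sum.elim x y ∘ finSumFinEquiv.symm = Fin.append x y := by
  rw [Equiv.comp_symm_eq]
  ext (i | j) <;> simp

theorem shatter_bound_semialgebraic_general {σ τ ι κ : Type*} [Fintype τ] [Fintype ι] [Fintype κ]
    (f : ι → MvPolynomial (σ ⊕ τ) ℝ) (φ : (ι → Prop) → Prop) (p : κ → σ → ℝ) :
    {A : Set (σ → ℝ) | ∃ y : τ → ℝ,
        A = {x | φ fun i => 0 ≤ eval (Sum.elim x y) (f i)} ∩ Set.range p}.ncard ≤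
      (2 * (Fintype.card κ * ∑ i, (f i).totalDegree) + 1) ^ Fintype.card τ := by
  simp only [← eval_specializeLeft]
  refine (ncard_setOf_trace_le (fun i => specializeLeft (f i)) φ p).trans ?_
  rw [Finset.mul_sum _ _ (Fintype.card κ)]
  gcongr with i
  exact Finset.sum_le_card_nsmul _ _ _ fun j _ => totalDegree_specializeLeft_le (f i) (p j)

/-- Let `Z ⊆ ℝ^m × ℝ^n` be defined by a Boolean formula `φ` in atoms `f_i(x,y) ≥ 0`, where the
`f_i` are `b ≥ 1` polynomials of degree at most `b` in `m + n` variables, and for `y ∈ ℝ^n` let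
`R_y = {x : (x,y) ∈ Z}`. Then for any `z ≥ 1` points `p_1,…,p_z ∈ ℝ^m`, the number of distinct
sets of the form `R_y ∩ {p_1,…,p_z}` is at most `(50·b²·z)^n`. -/
theorem shatter_bound_semialgebraic (m n b : ℕ) (hb : 1 ≤ b)
    (f : Fin b → MvPolynomial (Fin (m + n)) ℝ)
    (hdeg : ∀ i, (f i).totalDegree ≤ b)
    (φ : (Fin b → Prop) → Prop)
    (Z : Set (Fin (m + n) → ℝ))
    (hZ : Z = {v | φ fun i => 0 ≤ eval v (f i)})
    (z : ℕ) (hz : 1 ≤ z) (p : Fin z → Fin m → ℝ) :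
    (Set.ncard {A : Set (Fin m → ℝ) | ∃ y : Fin n → ℝ,
        A = {x : Fin m → ℝ | Fin.append x y ∈ Z} ∩ Set.range p} : ℝ)
      ≤ (50 * (b : ℝ) ^ 2 * (z : ℝ)) ^ n := by
  let f' i := rename finSumFinEquiv.symm (f i)
  have eval_f' i x y : eval (Sum.elim x y) (f' i) = eval (Fin.append x y) (f i) := by
    rw [eval_rename, sumElim_comp_finSumFinEquiv_symm]
  have sum_le : ∑ i, (f' i).totalDegree ≤ b ^ 2 :=
    (Finset.sum_le_card_nsmul _ _ b fun i _ =>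
      (totalDegree_rename_le _ _).trans (hdeg i)).trans_eq (by simp [sq])
  have base_le : 2 * (z * ∑ i, (f' i).totalDegree) + 1 ≤ 50 * b ^ 2 * z := by
    have : z * ∑ i, (f' i).totalDegree ≤ z * b ^ 2 := by gcongr
    have : 0 < b ^ 2 * z := by positivity
    linarith
  have ncard_le := shatter_bound_semialgebraic_general f' φ p
  simp only [eval_f', Fintype.card_fin] at ncard_le
  subst hZ
  exact_mod_cast ncard_le.trans (Nat.pow_le_pow_left base_le n)
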